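/- Let (0, x*) ∈ D. Then V(0, x*, 0) = 0, and there exists a C^∞ function φ of one real variable such that the germ of V at the singular point (0, x*, 0) is C^∞-smoothly orbitally equivalent to the germ at 0 of the vector field ξ̇ = n·ξ + φ(ζ)·ηⁿ, η̇ = η, ζ̇ = 0. -/

import Mathlib

open Filter Topology

/-- Partial derivative of `g : ℝ² → ℝ` with respect to the first coordinate. -/
noncomputable def d1 (g : ℝ × ℝ → ℝ) (q : ℝ × ℝ) : ℝ := fderiv ℝ g q ((1 : ℝ), (0 : ℝ))

/-- Partial derivative of `g : ℝ² → ℝ` with respect to the second coordinate. -/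
noncomputable def d2 (g : ℝ × ℝ → ℝ) (q : ℝ × ℝ) : ℝ := fderiv ℝ g q ((0 : ℝ), (1 : ℝ))

/-- Two vector fields `V`, `N` with marked points `x₀`, `y₀` are `C^∞`-smoothly orbitally
equivalent (as germs) if there are open neighborhoods `U ∋ x₀`, `U' ∋ y₀` with `U`
contained in the domain `Dom`, a `C^∞` diffeomorphism `Φ : U → U'` with `Φ x₀ = y₀`, and
a `C^∞` nowhere-vanishing function `h : U → ℝ` with `DΦ(x)·V(x) = h(x)·N(Φ(x))` on `U`. -/
def OrbEquiv {E : Type*} [NormedAddCommGroup E] [NormedSpace ℝ E]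
    (Dom : Set E) (V N : E → E) (x₀ y₀ : E) : Prop :=
  ∃ (U U' : Set E) (Φ Ψ : E → E) (h : E → ℝ),
    IsOpen U ∧ IsOpen U' ∧ x₀ ∈ U ∧ y₀ ∈ U' ∧ U ⊆ Dom ∧
    ContDiffOn ℝ (⊤ : ℕ∞) Φ U ∧ ContDiffOn ℝ (⊤ : ℕ∞) Ψ U' ∧
    Φ x₀ = y₀ ∧ Set.MapsTo Φ U U' ∧ Set.MapsTo Ψ U' U ∧
    (∀ x ∈ U, Ψ (Φ x) = x) ∧ (∀ y ∈ U', Φ (Ψ y) = y) ∧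
    ContDiffOn ℝ (⊤ : ℕ∞) h U ∧ (∀ x ∈ U, h x ≠ 0) ∧
    ∀ x ∈ U, fderiv ℝ Φ x (V x) = h x • N (Φ x)

/-! After shears `w ↦ w + b x * η ^ k`, `k < n`, which remove the terms of low order, the vector
field is the sum of the normal form `N` and a perturbation of higher order for the weights `n`,
`1`, `0` of `w`, `η`, `x`; nothing removes the resonant terms `φ x * η ^ n`. In coordinates moving
with the flow of `N`, whose time is written as `3 log τ`, the perturbed field becomes a
differential equation in `τ` with a right-hand side smooth in `τ`, `τ log τ` and the unknown,
regular up to `τ = 0`. Its solutions on `[0, 1]` depend smoothly on their value at `τ = 0`, by the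
inverse function theorem in `C([0, 1], E)`. The map from the value at `τ = 0` to the value at
`τ = 1` is a conjugacy, since rescaling `τ` amounts to applying the flow of `N`. -/

open scoped ContDiff

universe u

section Nemytskii

/-- The bilinear operator applying a continuous family of continuous linear maps pointwise to a
continuous function. It expresses the derivative of a Nemytskii operator. -/
noncomputable def pointwiseApply (K E F : Type*) [TopologicalSpace K] [CompactSpace K]
    [NormedAddCommGroup E] [NormedSpace ℝ E] [NormedAddCommGroup F] [NormedSpace ℝ F] :
    C(K, E →L[ℝ] F) →L[ℝ] C(K, E) →L[ℝ] C(K, F) :=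
  LinearMap.mkContinuous₂
    (LinearMap.mk₂ ℝ
      (fun (T : C(K, E →L[ℝ] F)) (u : C(K, E)) =>
        (⟨fun x => T x (u x), T.continuous.clm_apply u.continuous⟩ : C(K, F)))
      (fun _ _ _ => by ext; simp) (fun _ _ _ => by ext; simp)
      (fun _ _ _ => by ext; simp) (fun _ _ _ => by ext; simp)) 1
    fun T u => by
      rw [one_mul, ContinuousMap.norm_le _ (by positivity)]
      exact fun x => (T x).le_of_opNorm_le_of_le (T.norm_coe_le_norm x) (u.norm_coe_le_norm x)

variable {K A : Type*} [TopologicalSpace K] [CompactSpace K] [NormedAddCommGroup A]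
  {E F : Type u} [NormedAddCommGroup E] [NormedAddCommGroup F]

/-- The Nemytskii (superposition) operator `u ↦ (s ↦ g (l s, u s))` of a function `g` depending on
a continuous parameter `l`, as a map between spaces of continuous functions. -/
def nemytskii (l : C(K, A)) (g : C(A × E, F)) (u : C(K, E)) : C(K, F) :=
  g.comp (l.prodMk u)

theorem continuous_nemytskii (l : C(K, A)) (g : C(A × E, F)) : Continuous (nemytskii l g) := by
  have hprod : LipschitzWith 1 fun u : C(K, E) => l.prodMk u := .mk_one fun u v =>
    (ContinuousMap.dist_le dist_nonneg).2 fun x => by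
      simpa [Prod.dist_eq] using ContinuousMap.dist_apply_le_dist x
  exact (ContinuousMap.continuous_postcomp g).comp hprod.continuous

variable [NormedSpace ℝ E] [NormedSpace ℝ F]

theorem hasFDerivAt_nemytskii (l : C(K, A)) {g : C(A × E, F)}
    {g' : C(A × E, E →L[ℝ] F)} (hg : ∀ a x, HasFDerivAt (fun y => g (a, y)) (g' (a, x)) x)
    (u : C(K, E)) :
    HasFDerivAt (nemytskii l g) (pointwiseApply K E F (nemytskii l g' u)) u := by
  rw [hasFDerivAt_iff_isLittleO_nhds_zero, Asymptotics.isLittleO_iff]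
  intro ε hε
  obtain ⟨δ, hδ, hclose⟩ :=
    Metric.continuousAt_iff.1 (continuous_nemytskii l g').continuousAt ε hε
  filter_upwards [Metric.ball_mem_nhds (0 : C(K, E)) hδ] with w hw
  rw [mem_ball_zero_iff] at hw
  rw [ContinuousMap.norm_le _ (by positivity)]
  intro x
  have hbound : ∀ y ∈ segment ℝ (u x) (u x + w x), ‖g' (l x, y) - g' (l x, u x)‖ ≤ ε := by
    intro y hy
    rw [segment_eq_image'] at hy
    obtain ⟨s, hs, rfl⟩ := hy
    have hdist : dist (u + s • w) u < δ := by
      rw [dist_eq_norm, add_sub_cancel_left, norm_smul, Real.norm_of_nonneg hs.1]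
      exact (mul_le_of_le_one_left (norm_nonneg _) hs.2).trans_lt hw
    rw [add_sub_cancel_left, ← dist_eq_norm]
    exact (ContinuousMap.dist_apply_le_dist x).trans (hclose hdist).le
  have hmean : ‖g (l x, u x + w x) - g (l x, u x) - g' (l x, u x) (u x + w x - u x)‖ ≤
      ε * ‖u x + w x - u x‖ :=
    (convex_segment (u x) (u x + w x)).norm_image_sub_le_of_norm_hasFDerivWithin_le'
      (fun y _ => (hg (l x) y).hasFDerivWithinAt) hbound
      (left_mem_segment ℝ _ _) (right_mem_segment ℝ _ _)
  rw [add_sub_cancel_left] at hmean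
  change ‖g (l x, u x + w x) - g (l x, u x) - g' (l x, u x) (w x)‖ ≤ ε * ‖w‖
  exact hmean.trans (by gcongr; exact w.norm_coe_le_norm x)

variable [NormedSpace ℝ A]

theorem hasFDerivAt_comp_prodMk {g : A × E → F} (hg : Differentiable ℝ g) (a : A) (x : E) :
    HasFDerivAt (fun y => g (a, y)) (fderiv ℝ g (a, x) ∘L ContinuousLinearMap.inr ℝ A E) x :=
  (hg (a, x)).hasFDerivAt.comp x (hasFDerivAt_prodMk_right a x)

theorem contDiff_nemytskii_nat (k : ℕ) (l : C(K, A)) {F : Type u} [NormedAddCommGroup F]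
    [NormedSpace ℝ F] {g : C(A × E, F)} (hg : ContDiff ℝ k g) : ContDiff ℝ k (nemytskii l g) := by
  induction k generalizing F with
  | zero => exact contDiff_zero.2 (continuous_nemytskii l g)
  | succ k ih =>
    push_cast at hg ⊢
    have hg' : ContDiff ℝ k fun z => fderiv ℝ g z ∘L ContinuousLinearMap.inr ℝ A E :=
      (hg.fderiv_right le_rfl).clm_comp contDiff_const
    exact contDiff_succ_iff_hasFDerivAt.2
      ⟨_, (pointwiseApply K E F).contDiff.comp (ih (g := ⟨_, hg'.continuous⟩) hg'),
        hasFDerivAt_nemytskii l (hasFDerivAt_comp_prodMk (hg.differentiable (by simp)))⟩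

theorem contDiff_nemytskii (l : C(K, A)) {g : C(A × E, F)} (hg : ContDiff ℝ ∞ g) :
    ContDiff ℝ ∞ (nemytskii l g) :=
  contDiff_infty.2 fun k => contDiff_nemytskii_nat k l (contDiff_infty.1 hg k)

end Nemytskii

section Volterra

variable {E : Type*} [NormedAddCommGroup E] [NormedSpace ℝ E]

/-- The Volterra operator `u ↦ (s ↦ ∫₀ˢ u)` on continuous functions on the unit interval. The
integrand is extended to `ℝ` by constants. -/
noncomputable def volterra (E : Type*) [NormedAddCommGroup E] [NormedSpace ℝ E] :
    C(unitInterval, E) →L[ℝ] C(unitInterval, E) :=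
  have hintegrable (u : C(unitInterval, E)) (a b : ℝ) :
      IntervalIntegrable (Set.IccExtend zero_le_one u) MeasureTheory.volume a b :=
    u.continuous.Icc_extend'.intervalIntegrable a b
  LinearMap.mkContinuous
    { toFun u := ⟨fun s => ∫ r in (0 : ℝ)..s, Set.IccExtend zero_le_one u r,
        (intervalIntegral.continuous_primitive (hintegrable u) 0).comp continuous_subtype_val⟩
      map_add' u v := by
        ext s
        exact intervalIntegral.integral_add (hintegrable u _ _) (hintegrable v _ _)
      map_smul' c u := by
        ext s
        exact intervalIntegral.integral_smul _ _ } 1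
    fun u => by
      rw [one_mul, ContinuousMap.norm_le _ (norm_nonneg _)]
      intro s
      refine (intervalIntegral.norm_integral_le_of_norm_le_const (C := ‖u‖)
        fun r _ => u.norm_coe_le_norm _).trans ?_
      rw [sub_zero, abs_of_nonneg s.2.1]
      exact mul_le_of_le_one_right (norm_nonneg _) s.2.2

theorem contDiff_integral_unitInterval {E F : Type u} [NormedAddCommGroup E] [NormedSpace ℝ E]
    [NormedAddCommGroup F] [NormedSpace ℝ F] {f : ℝ × E → F} (hf : ContDiff ℝ ∞ f) :
    ContDiff ℝ ∞ fun y => ∫ r in (0 : ℝ)..1, f (r, y) := by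
  let l : C(unitInterval, ℝ) := ⟨Subtype.val, continuous_subtype_val⟩
  have hsmooth : ContDiff ℝ ∞ fun y => ContinuousMap.evalCLM ℝ (1 : unitInterval)
      (volterra F (nemytskii l ⟨f, hf.continuous⟩ (ContinuousLinearMap.const ℝ unitInterval y))) :=
    (ContinuousLinearMap.contDiff _).comp ((volterra F).contDiff.comp
      ((contDiff_nemytskii l hf).comp (ContinuousLinearMap.contDiff _)))
  convert hsmooth using 2 with y
  refine intervalIntegral.integral_congr fun r hr => ?_
  rw [Set.uIcc_of_le zero_le_one] at hr
  rw [Set.IccExtend_of_mem _ _ hr]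
  rfl

end Volterra

section Hadamard

variable {E F : Type u} [NormedAddCommGroup E] [NormedSpace ℝ E] [NormedAddCommGroup F]
  [NormedSpace ℝ F] [CompleteSpace F]

theorem dslope_zero_eq_integral {f : ℝ → F} (hf : ContDiff ℝ 1 f) (t : ℝ) :
    dslope f 0 t = ∫ r in (0 : ℝ)..1, deriv f (r * t) := by
  rcases eq_or_ne t 0 with rfl | ht
  · simp
  · have hftc : ∫ r in (0 : ℝ)..t, deriv f r = f t - f 0 :=
      intervalIntegral.integral_deriv_eq_sub (fun r _ => hf.differentiable one_ne_zero r)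
        ((hf.continuous_deriv le_rfl).intervalIntegrable _ _)
    rw [intervalIntegral.integral_comp_mul_right _ ht, zero_mul, one_mul, hftc,
      dslope_of_ne _ ht, slope_def_module, sub_zero]

theorem contDiff_dslope_zero {f : ℝ × E → F} (hf : ContDiff ℝ ∞ f) :
    ContDiff ℝ ∞ fun z : ℝ × E => dslope (fun t => f (t, z.2)) 0 z.1 := by
  have hderiv (t : ℝ) (y : E) : deriv (fun t => f (t, y)) t = fderiv ℝ f (t, y) (1, 0) :=
    ((hf.differentiable (by simp) (t, y)).hasFDerivAt.comp_hasDerivAt t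
      ((hasDerivAt_id t).prodMk (hasDerivAt_const t y))).deriv
  have hf' : ContDiff ℝ ∞ fun z : ℝ × ℝ × E => fderiv ℝ f (z.1 * z.2.1, z.2.2) (1, 0) :=
    ((hf.fderiv_right (m := ∞) (by simp)).comp (by fun_prop)).clm_apply contDiff_const
  convert contDiff_integral_unitInterval hf' using 2 with z
  have hslice : ContDiff ℝ 1 fun t => f (t, z.2) := (hf.of_le (by simp)).comp (by fun_prop)
  simp only [dslope_zero_eq_integral hslice, hderiv]

theorem exists_contDiff_eq_add_smul {f : ℝ × E → F} (hf : ContDiff ℝ ∞ f) :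
    ∃ R : ℝ × E → F, ContDiff ℝ ∞ R ∧ (∀ t y, f (t, y) = f (0, y) + t • R (t, y)) ∧
      ∀ y, R (0, y) = deriv (fun t => f (t, y)) 0 := by
  refine ⟨_, contDiff_dslope_zero hf, fun t y => ?_, fun y => dslope_same _ _⟩
  have hslope := sub_smul_dslope (fun t => f (t, y)) 0 t
  rw [sub_zero] at hslope
  simp only [hslope, add_sub_cancel]

end Hadamard

section InverseFunction

variable {E : Type*} [NormedAddCommGroup E] [NormedSpace ℝ E] [CompleteSpace E]

theorem exists_openPartialHomeomorph_contDiffOn_symm {f : E → E} {U : Set E} {a : E}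
    {f' : E ≃L[ℝ] E} (hU : IsOpen U) (hf : ContDiffOn ℝ ∞ f U) (ha : a ∈ U)
    (hf' : HasFDerivAt f (f' : E →L[ℝ] E) a) :
    ∃ e : OpenPartialHomeomorph E E, ⇑e = f ∧ a ∈ e.source ∧ e.source ⊆ U ∧
      ContDiffOn ℝ ∞ e.symm e.target := by
  have hfa {x : E} (hx : x ∈ U) : ContDiffAt ℝ ∞ f x := hf.contDiffAt (hU.mem_nhds hx)
  let W := U ∩ fderiv ℝ f ⁻¹' Set.range ((↑) : (E ≃L[ℝ] E) → E →L[ℝ] E)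
  have hW : IsOpen W := (hf.continuousOn_fderiv_of_isOpen hU (by simp)).isOpen_inter_preimage hU
    ContinuousLinearEquiv.isOpen
  let e := ((hfa ha).toOpenPartialHomeomorph f hf' (by simp)).restrOpen W hW
  refine ⟨e, rfl, ⟨(hfa ha).mem_toOpenPartialHomeomorph_source hf' (by simp), ha, f',
    hf'.fderiv.symm⟩, fun x hx => hx.2.1, fun y hy => ContDiffAt.contDiffWithinAt ?_⟩
  obtain ⟨-, hyU, y', hy'⟩ := e.map_target hy
  refine e.contDiffAt_symm (f₀' := y') hy ?_ (hfa hyU)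
  exact hy' ▸ ((hfa hyU).differentiableAt (by simp)).hasFDerivAt

end InverseFunction

section IntegralEquation

variable {A E : Type*} [NormedAddCommGroup A] [NormedAddCommGroup E] [NormedSpace ℝ E]
  {l : C(ℝ, A)} {g : C(A × E, E)}

/-- The defect `u - ∫ g (l, u)` of Picard iteration for the equation `u' = g (l s, u)` on the unit
interval. -/
noncomputable def picardDefect (l : C(ℝ, A)) (g : C(A × E, E)) (u : C(unitInterval, E)) :
    C(unitInterval, E) :=
  u - volterra E (nemytskii (l.restrict unitInterval) g u)

/-- The function `u` solves `u' = g (l s, u)` on the unit interval with initial value `c`, in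
integral form. -/
def IsIntegralSolution (l : C(ℝ, A)) (g : C(A × E, E)) (c : E) (u : C(unitInterval, E)) : Prop :=
  picardDefect l g u = ContinuousMap.const _ c

theorem picardDefect_zero (h0 : ∀ s ∈ Set.Icc (0 : ℝ) 1, g (l s, 0) = 0) :
    picardDefect l g 0 = 0 := by
  have hnem : nemytskii (l.restrict unitInterval) g 0 = 0 := ContinuousMap.ext fun s => h0 s s.2
  rw [picardDefect, hnem, map_zero, sub_zero]

theorem IsIntegralSolution.exists_hasDerivAt [CompleteSpace E] {c : E} {u : C(unitInterval, E)}
    (hu : IsIntegralSolution l g c u) :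
    ∃ U : C(ℝ, E), U 0 = c ∧ (∀ s : unitInterval, U s = u s) ∧
      ∀ s ∈ Set.Icc (0 : ℝ) 1, HasDerivAt U (g (l s, U s)) s := by
  let G : ℝ → E := Set.IccExtend zero_le_one (nemytskii (l.restrict unitInterval) g u)
  have hG : Continuous G := (nemytskii (l.restrict unitInterval) g u).continuous.Icc_extend'
  have hU (s : unitInterval) : c + ∫ r in (0 : ℝ)..s, G r = u s :=
    (sub_eq_iff_eq_add.1 (DFunLike.congr_fun hu s)).symm
  have hprim : Continuous fun s => c + ∫ r in (0 : ℝ)..s, G r :=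
    (intervalIntegral.continuous_primitive (fun _ _ => hG.intervalIntegrable _ _) 0).const_add c
  refine ⟨⟨_, hprim⟩, by simp, hU, fun s hs => ?_⟩
  have hGs : G s = g (l s, c + ∫ r in (0 : ℝ)..s, G r) := by
    rw [hU ⟨s, hs⟩]
    exact Set.IccExtend_of_mem zero_le_one _ hs
  rw [ContinuousMap.coe_mk, ← hGs]
  exact (hG.integral_hasStrictDerivAt 0 s).hasDerivAt.const_add c

theorem isIntegralSolution_of_hasDerivAt [CompleteSpace E] {w : C(ℝ, E)}
    (hw : ∀ s ∈ Set.Ioo (0 : ℝ) 1, HasDerivAt w (g (l s, w s)) s) :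
    IsIntegralSolution l g (w 0) (w.restrict unitInterval) := by
  ext s
  have hcontinuous : Continuous fun r => g (l r, w r) := by fun_prop
  have hftc : ∫ r in (0 : ℝ)..s, g (l r, w r) = w s - w 0 :=
    intervalIntegral.integral_eq_sub_of_hasDerivAt_of_le s.2.1 w.continuous.continuousOn
      (fun r hr => hw r ⟨hr.1, hr.2.trans_le s.2.2⟩) (hcontinuous.intervalIntegrable _ _)
  have hvol : volterra E (nemytskii (l.restrict unitInterval) g (w.restrict unitInterval)) s =
      ∫ r in (0 : ℝ)..s, g (l r, w r) := by
    refine intervalIntegral.integral_congr fun r hr => ?_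
    rw [Set.uIcc_of_le s.2.1] at hr
    exact Set.IccExtend_of_mem zero_le_one _ ⟨hr.1, hr.2.trans s.2.2⟩
  change w s - volterra E _ s = w 0
  rw [hvol, hftc, sub_sub_cancel]

end IntegralEquation

section SolutionOperator

variable {A E : Type u} [NormedAddCommGroup A] [NormedSpace ℝ A] [NormedAddCommGroup E]
  [NormedSpace ℝ E] {l : C(ℝ, A)} {g : C(A × E, E)}

theorem contDiff_picardDefect (hg : ContDiff ℝ ∞ g) : ContDiff ℝ ∞ (picardDefect l g) :=
  contDiff_id.sub ((volterra E).contDiff.comp (contDiff_nemytskii _ hg))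

theorem hasFDerivAt_picardDefect_zero (hg : ContDiff ℝ ∞ g)
    (h1 : ∀ s ∈ Set.Icc (0 : ℝ) 1, HasFDerivAt (fun v => g (l s, v)) (0 : E →L[ℝ] E) 0) :
    HasFDerivAt (picardDefect l g) (ContinuousLinearMap.id ℝ _) 0 := by
  let g' : C(A × E, E →L[ℝ] E) :=
    ⟨fun z => fderiv ℝ g z ∘L ContinuousLinearMap.inr ℝ A E,
      (hg.continuous_fderiv (by simp)).clm_comp continuous_const⟩
  have hg' (a : A) (x : E) : HasFDerivAt (fun y => g (a, y)) (g' (a, x)) x :=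
    hasFDerivAt_comp_prodMk (hg.differentiable (by simp)) a x
  have hzero : nemytskii (l.restrict unitInterval) g' 0 = 0 :=
    ContinuousMap.ext fun s => (hg' (l s) 0).unique (h1 s s.2)
  have hnem := hasFDerivAt_nemytskii (l.restrict unitInterval) hg' 0
  rw [hzero, map_zero] at hnem
  refine ((hasFDerivAt_id 0).sub ((volterra E).hasFDerivAt.comp 0 hnem)).congr_fderiv ?_
  rw [ContinuousLinearMap.comp_zero, sub_zero]

/-- The smooth solution operator comes from the inverse function theorem for `picardDefect`, whose
derivative at `0` is the identity. -/
theorem exists_contDiffOn_isIntegralSolution [CompleteSpace E] (hg : ContDiff ℝ ∞ g)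
    (h0 : ∀ s ∈ Set.Icc (0 : ℝ) 1, g (l s, 0) = 0)
    (h1 : ∀ s ∈ Set.Icc (0 : ℝ) 1, HasFDerivAt (fun v => g (l s, v)) (0 : E →L[ℝ] E) 0) :
    ∃ (S : E → C(unitInterval, E)) (O : Set E) (ε : ℝ), 0 < ε ∧ IsOpen O ∧ 0 ∈ O ∧
      ContDiffOn ℝ ∞ S O ∧ S 0 = 0 ∧
      HasFDerivAt S (ContinuousLinearMap.const ℝ unitInterval : E →L[ℝ] C(unitInterval, E)) 0 ∧
      (∀ c ∈ O, IsIntegralSolution l g c (S c)) ∧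
      ∀ c u, ‖u‖ < ε → IsIntegralSolution l g c u → u = S c := by
  have hderiv : HasFDerivAt (picardDefect l g)
      (ContinuousLinearEquiv.refl ℝ C(unitInterval, E) : _ →L[ℝ] _) 0 :=
    hasFDerivAt_picardDefect_zero hg h1
  obtain ⟨e, he, hes, -, hsymm⟩ := exists_openPartialHomeomorph_contDiffOn_symm isOpen_univ
    (contDiff_picardDefect hg).contDiffOn (Set.mem_univ 0) hderiv
  let const : E →L[ℝ] C(unitInterval, E) := ContinuousLinearMap.const ℝ unitInterval
  have he0 : e 0 = const 0 := by rw [he, picardDefect_zero h0, map_zero]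
  have hes0 : e.symm (const 0) = 0 := he0 ▸ e.left_inv hes
  have het : const 0 ∈ e.target := he0 ▸ e.map_source hes
  obtain ⟨ε, hε, hball⟩ := Metric.isOpen_iff.1 e.open_source 0 hes
  refine ⟨fun c => e.symm (const c), const ⁻¹' e.target, ε, hε,
    e.open_target.preimage const.continuous, het,
    hsymm.comp const.contDiff.contDiffOn fun _ h => h, hes0, ?_, fun c hc => ?_,
    fun c u hu hsol => ?_⟩
  · have hesymm : HasFDerivAt e.symm _ (const 0) :=
      e.hasFDerivAt_symm het (by rw [hes0, he]; exact hderiv)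
    exact hesymm.comp 0 const.hasFDerivAt
  · exact (congrFun he _).symm.trans (e.right_inv hc)
  · have hec : e u = const c := (congrFun he u).trans hsol
    exact (e.left_inv (hball (mem_ball_zero_iff.2 hu))).symm.trans (congrArg e.symm hec)

end SolutionOperator

section WaveMap

variable {A E : Type u} [NormedAddCommGroup A] [NormedAddCommGroup E] [NormedSpace ℝ E]

/-- The maps `σ (τ, ·)`, `0 < τ`, form the flow of the vector field `N` in multiplicative time `τ`,
as far as its generator and the following compatibility with the equation `u' = g (l s, u)` are
concerned: `s ↦ σ (τ, u (τ s))` is a solution whenever `u` is. The equation is to be thought of as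
a perturbation of `N` seen in the coordinates moving with the flow. -/
structure IsScalingFlow (σ : ℝ × E → E) (N : E → E) (l : C(ℝ, A)) (g : C(A × E, E)) : Prop where
  differentiableAt {τ : ℝ} (hτ : 0 < τ) (v : E) : DifferentiableAt ℝ σ (τ, v)
  one_apply (v : E) : σ (1, v) = v
  hasDerivAt_one (v : E) : HasDerivAt (fun τ => σ (τ, v)) (N v) 1
  fderiv_smul {τ s : ℝ} (hτ : 0 < τ) (hτ' : τ ≤ 1) (hs : 0 < s) (hs' : s ≤ 1) (v : E) :
    fderiv ℝ (fun w => σ (τ, w)) v (τ • g (l (τ * s), v)) = g (l s, σ (τ, v))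

namespace IsScalingFlow

variable {σ : ℝ × E → E} {N : E → E} {l : C(ℝ, A)} {g : C(A × E, E)}

theorem differentiable_slice (h : IsScalingFlow σ N l g) {τ : ℝ} (hτ : 0 < τ) :
    Differentiable ℝ fun v => σ (τ, v) := fun v =>
  (h.differentiableAt hτ v).comp v (by fun_prop)

theorem hasDerivAt_comp (h : IsScalingFlow σ N l g) {U : ℝ → E} {U' : E}
    (hU : HasDerivAt U U' 1) : HasDerivAt (fun τ => σ (τ, U τ)) (N (U 1) + U') 1 := by
  have hσ := (h.differentiableAt one_pos (U 1)).hasFDerivAt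
  have htime : fderiv ℝ σ (1, U 1) (1, 0) = N (U 1) :=
    (hσ.comp_hasDerivAt (1 : ℝ) ((hasDerivAt_id _).prodMk (hasDerivAt_const _ _))).unique
      (h.hasDerivAt_one _)
  have hspace : fderiv ℝ σ (1, U 1) ∘L ContinuousLinearMap.inr ℝ ℝ E = .id ℝ E :=
    (hσ.comp (U 1) (hasFDerivAt_prodMk_right (1 : ℝ) (U 1))).unique <|
      (hasFDerivAt_id _).congr_of_eventuallyEq (.of_forall h.one_apply)
  refine (hσ.comp_hasDerivAt (1 : ℝ) ((hasDerivAt_id _).prodMk hU)).congr_deriv ?_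
  calc fderiv ℝ σ (1, U 1) (1, U')
      = fderiv ℝ σ (1, U 1) (1, 0) + (fderiv ℝ σ (1, U 1) ∘L .inr ℝ ℝ E) U' := by
        simp [← map_add]
    _ = N (U 1) + U' := by rw [htime, hspace, ContinuousLinearMap.id_apply]

theorem isIntegralSolution [CompleteSpace E] (h : IsScalingFlow σ N l g) {τ : ℝ}
    (hτ : 0 < τ) (hτ' : τ ≤ 1) {U : C(ℝ, E)}
    (hU : ∀ s ∈ Set.Icc (0 : ℝ) 1, HasDerivAt U (g (l s, U s)) s) :
    ∃ w : C(unitInterval, E), (∀ s, w s = σ (τ, U (τ * s))) ∧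
      IsIntegralSolution l g (σ (τ, U 0)) w := by
  let w : C(ℝ, E) :=
    ⟨fun s => σ (τ, U (τ * s)), (h.differentiable_slice hτ).continuous.comp (by fun_prop)⟩
  have hw : ∀ s ∈ Set.Ioo (0 : ℝ) 1, HasDerivAt w (g (l s, w s)) s := by
    intro s hs
    have hUs : HasDerivAt (fun s => U (τ * s)) (τ • g (l (τ * s), U (τ * s))) s :=
      (hU (τ * s) ⟨by nlinarith [hs.1], by nlinarith [hs.1, hs.2]⟩).scomp s
        (by simpa using (hasDerivAt_id s).const_mul τ)
    exact ((h.differentiable_slice hτ _).hasFDerivAt.comp_hasDerivAt s hUs).congr_deriv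
      (h.fderiv_smul hτ hτ' hs.1 hs.2.le _)
  refine ⟨w.restrict unitInterval, fun s => rfl, ?_⟩
  simpa [w] using isIntegralSolution_of_hasDerivAt hw

theorem exists_norm_lt_isIntegralSolution [CompleteSpace E] (h : IsScalingFlow σ N l g) {ε : ℝ}
    (hε : 0 < ε) :
    ∃ δ > 0, ∀ U : C(ℝ, E), (∀ s ∈ Set.Icc (0 : ℝ) 1, HasDerivAt U (g (l s, U s)) s) →
      (∀ s ∈ Set.Icc (0 : ℝ) 1, ‖U s‖ < δ) → ∀ᶠ τ in 𝓝[≤] (1 : ℝ),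
        ∃ w : C(unitInterval, E), ‖w‖ < ε ∧ w 1 = σ (τ, U τ) ∧
          IsIntegralSolution l g (σ (τ, U 0)) w := by
  have hσ : Tendsto σ (𝓝 (1, 0)) (𝓝 0) := by
    simpa [h.one_apply] using (h.differentiableAt one_pos 0).continuousAt.tendsto
  obtain ⟨δ, hδ, hsmall⟩ := Metric.eventually_nhds_iff.1 (hσ (Metric.ball_mem_nhds 0 hε))
  refine ⟨δ, hδ, fun U hU hUδ => ?_⟩
  filter_upwards [self_mem_nhdsWithin, mem_nhdsWithin_of_mem_nhds (Ioi_mem_nhds one_pos),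
    mem_nhdsWithin_of_mem_nhds (Metric.ball_mem_nhds 1 hδ)] with τ hτ' hτ hτδ
  obtain ⟨w, hw, hsol⟩ := h.isIntegralSolution hτ hτ' hU
  refine ⟨w, (ContinuousMap.norm_lt_iff _ hε).2 fun s => ?_, by simp [hw], hsol⟩
  have hτs : τ * s ∈ Set.Icc (0 : ℝ) 1 := (⟨τ, hτ.le, hτ'⟩ * s : unitInterval).2
  rw [hw, ← mem_ball_zero_iff]
  exact hsmall (max_lt hτδ ((dist_zero_right _).trans_lt (hUδ _ hτs)))

/-- The conjugacy assigns to an initial value at `s = 0` the value at `s = 1` of the solution; it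
commutes with `σ (τ, ·)` because `σ (τ, u (τ s))` is again a small solution. -/
theorem exists_conjugacy [NormedSpace ℝ A] [CompleteSpace E] (h : IsScalingFlow σ N l g)
    (hg : ContDiff ℝ ∞ g) (h0 : ∀ s ∈ Set.Icc (0 : ℝ) 1, g (l s, 0) = 0)
    (h1 : ∀ s ∈ Set.Icc (0 : ℝ) 1, HasFDerivAt (fun v => g (l s, v)) (0 : E →L[ℝ] E) 0) :
    ∃ (Ψ : E → E) (O : Set E), IsOpen O ∧ 0 ∈ O ∧ ContDiffOn ℝ ∞ Ψ O ∧ Ψ 0 = 0 ∧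
      HasFDerivAt Ψ (.id ℝ E) 0 ∧ ∀ c ∈ O, fderiv ℝ Ψ c (N c) = N (Ψ c) + g (l 1, Ψ c) := by
  obtain ⟨S, O, ε, hε, hO, h0O, hS, hS0, hS', hsol, huniq⟩ :=
    exists_contDiffOn_isIntegralSolution hg h0 h1
  obtain ⟨δ, hδ, hsmall⟩ := h.exists_norm_lt_isIntegralSolution hε
  let evalOne : C(unitInterval, E) →L[ℝ] E := ContinuousMap.evalCLM ℝ 1
  let Ψ : E → E := fun c => evalOne (S c)
  have hΨ : ContDiffOn ℝ ∞ Ψ O := evalOne.contDiff.comp_contDiffOn hS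
  refine ⟨Ψ, O ∩ S ⁻¹' Metric.ball 0 δ,
    hS.continuousOn.isOpen_inter_preimage hO Metric.isOpen_ball, ⟨h0O, by simp [hS0, hδ]⟩,
    hΨ.mono Set.inter_subset_left, by simp [Ψ, hS0], evalOne.hasFDerivAt.comp 0 hS', ?_⟩
  rintro c ⟨hc, hcδ⟩
  obtain ⟨U, hU0, hUS, hU⟩ := (hsol c hc).exists_hasDerivAt
  have hU1 : U 1 = Ψ c := hUS 1
  have hUδ : ∀ s ∈ Set.Icc (0 : ℝ) 1, ‖U s‖ < δ := fun s hs =>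
    (congrArg norm (hUS ⟨s, hs⟩)).trans_lt <|
      ((S c).norm_coe_le_norm _).trans_lt (mem_ball_zero_iff.1 hcδ)
  have hwave : ∀ᶠ τ in 𝓝[≤] (1 : ℝ), Ψ (σ (τ, c)) = σ (τ, U τ) := by
    filter_upwards [hsmall U hU hUδ] with τ ⟨w, hwε, hw1, hw⟩
    rw [← hU0]
    exact (congrArg evalOne (huniq _ w hwε hw)).symm.trans hw1
  have hleft : HasDerivAt (fun τ => σ (τ, U τ)) (N (U 1) + g (l 1, U 1)) 1 :=
    h.hasDerivAt_comp (hU 1 ⟨zero_le_one, le_rfl⟩)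
  have hΨc : HasFDerivAt Ψ (fderiv ℝ Ψ c) (σ (1, c)) := by
    rw [h.one_apply]
    exact ((hΨ.contDiffAt (hO.mem_nhds hc)).differentiableAt (by simp)).hasFDerivAt
  have hright : HasDerivAt (fun τ => Ψ (σ (τ, c))) (fderiv ℝ Ψ c (N c)) 1 :=
    hΨc.comp_hasDerivAt (f := fun τ => σ (τ, c)) 1 (h.hasDerivAt_one c)
  rw [← hU1]
  exact (uniqueDiffOn_Iic 1 1 Set.self_mem_Iic).eq_deriv _ hright.hasDerivWithinAt
    (hleft.hasDerivWithinAt.congr_of_eventuallyEq_of_mem hwave Set.self_mem_Iic)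

end IsScalingFlow

end WaveMap

section OrbitalEquivalence

variable {E : Type*} [NormedAddCommGroup E] [NormedSpace ℝ E]

theorem orbEquiv_of_conjugacy [CompleteSpace E] {O : Set E} {V N Ψ : E → E} {y₀ : E}
    {Ψ' : E ≃L[ℝ] E} (hO : IsOpen O) (hy₀ : y₀ ∈ O) (hΨ : ContDiffOn ℝ ∞ Ψ O)
    (hΨ' : HasFDerivAt Ψ (Ψ' : E →L[ℝ] E) y₀)
    (hconj : ∀ y ∈ O, fderiv ℝ Ψ y (N y) = V (Ψ y)) :
    OrbEquiv Set.univ V N (Ψ y₀) y₀ := by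
  obtain ⟨e, rfl, hes, hesub, hsymm⟩ :=
    exists_openPartialHomeomorph_contDiffOn_symm hO hΨ hy₀ hΨ'
  refine ⟨e.target, e.source, e.symm, e, fun _ => 1, e.open_target, e.open_source,
    e.map_source hes, hes, Set.subset_univ _, hsymm, hΨ.mono hesub, e.left_inv hes,
    e.symm.mapsTo, e.mapsTo, fun _ => e.right_inv, fun _ => e.left_inv, contDiffOn_const,
    fun _ _ => one_ne_zero, fun x hx => ?_⟩
  have hy : e.symm x ∈ O := hesub (e.map_target hx)
  have he : HasFDerivAt e (fderiv ℝ e (e.symm x)) (e.symm x) :=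
    ((hΨ.contDiffAt (hO.mem_nhds hy)).differentiableAt (by simp)).hasFDerivAt
  have hesymm : HasFDerivAt e.symm (fderiv ℝ e.symm x) (e (e.symm x)) := by
    rw [e.right_inv hx]
    exact ((hsymm.contDiffAt (e.open_target.mem_nhds hx)).differentiableAt (by simp)).hasFDerivAt
  have hcomp : fderiv ℝ e.symm x ∘L fderiv ℝ e (e.symm x) = .id ℝ E :=
    (hesymm.comp _ he).unique <| (hasFDerivAt_id _).congr_of_eventuallyEq
      (e.eventually_left_inverse (e.map_target hx))
  calc fderiv ℝ e.symm x (V x)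
      = fderiv ℝ e.symm x (fderiv ℝ e (e.symm x) (N (e.symm x))) := by
        rw [hconj _ hy, e.right_inv hx]
    _ = (1 : ℝ) • N (e.symm x) := by
        rw [← ContinuousLinearMap.comp_apply, hcomp, one_smul, ContinuousLinearMap.id_apply]

theorem OrbEquiv.of_semiconj {Dom Dom' : Set E} {V X N Θ Θ' : E → E} {z₀ y₀ : E}
    (hX : OrbEquiv Dom' X N (Θ z₀) y₀) (hΘ : ContDiff ℝ ∞ Θ) (hΘ' : ContDiff ℝ ∞ Θ')
    (hleft : Function.LeftInverse Θ' Θ) (hright : Function.RightInverse Θ' Θ)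
    (hDom : Θ ⁻¹' Dom' ⊆ Dom) (hconj : ∀ z ∈ Θ ⁻¹' Dom', fderiv ℝ Θ z (V z) = X (Θ z)) :
    OrbEquiv Dom V N z₀ y₀ := by
  obtain ⟨U, U', Φ, Ψ, h, hU, hU', hx₀, hy₀, hUD, hΦ, hΨ, hΦ₀, hΦU, hΨU', hΨΦ, hΦΨ, hh, hh0,
    heq⟩ := hX
  refine ⟨Θ ⁻¹' U, U', Φ ∘ Θ, Θ' ∘ Ψ, h ∘ Θ, hU.preimage hΘ.continuous, hU', hx₀, hy₀,
    (Set.preimage_mono hUD).trans hDom, hΦ.comp hΘ.contDiffOn (Set.mapsTo_preimage Θ U),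
    hΘ'.comp_contDiffOn hΨ, hΦ₀, fun z hz => hΦU hz,
    fun y hy => by simpa [hright (Ψ y)] using hΨU' hy,
    fun z hz => by simp [hΨΦ _ hz, hleft z], fun y hy => by simp [hright (Ψ y), hΦΨ y hy],
    hh.comp hΘ.contDiffOn (Set.mapsTo_preimage Θ U), fun z hz => hh0 _ hz, fun z hz => ?_⟩
  have hΦz : DifferentiableAt ℝ Φ (Θ z) :=
    (hΦ.contDiffAt (hU.mem_nhds hz)).differentiableAt (by simp)
  rw [fderiv_comp z hΦz (hΘ.differentiable (by simp) z), ContinuousLinearMap.comp_apply,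
    hconj z (hUD hz), heq _ hz]
  rfl

theorem OrbEquiv.congr_of_eventuallyEq {Dom Dom' : Set E} {V X N : E → E} {z₀ y₀ : E}
    (hX : OrbEquiv Dom' X N z₀ y₀) (hDom : Dom ∈ 𝓝 z₀) (hVX : V =ᶠ[𝓝 z₀] X) :
    OrbEquiv Dom V N z₀ y₀ := by
  obtain ⟨Ω, hΩsub, hΩ, hz₀⟩ := mem_nhds_iff.1 (inter_mem hDom hVX)
  obtain ⟨U, U', Φ, Ψ, h, hU, hU', hx₀, hy₀, -, hΦ, hΨ, hΦ₀, hΦU, hΨU', hΨΦ, hΦΨ, hh, hh0, heq⟩ :=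
    hX
  have hΨ₀ : Ψ y₀ = z₀ := hΦ₀ ▸ hΨΦ _ hx₀
  exact ⟨U ∩ Ω, U' ∩ Ψ ⁻¹' Ω, Φ, Ψ, h, hU.inter hΩ, hΨ.continuousOn.isOpen_inter_preimage hU' hΩ,
    ⟨hx₀, hz₀⟩, ⟨hy₀, by simpa [hΨ₀] using hz₀⟩, fun z hz => (hΩsub hz.2).1,
    hΦ.mono Set.inter_subset_left, hΨ.mono Set.inter_subset_left, hΦ₀,
    fun z hz => ⟨hΦU hz.1, by simpa [hΨΦ z hz.1] using hz.2⟩, fun y hy => ⟨hΨU' hy.1, hy.2⟩,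
    fun z hz => hΨΦ z hz.1, fun y hy => hΦΨ y hy.1, hh.mono Set.inter_subset_left,
    fun z hz => hh0 z hz.1, fun z hz => (congrArg _ (hΩsub hz.2).2).trans (heq z hz.1)⟩

end OrbitalEquivalence

section NormalForm

/-- The resonant normal form `(n w + φ x * η ^ n, η, 0)` in coordinates `(w, η, x)`. -/
def normalField (n : ℕ) (φ : ℝ → ℝ) (v : ℝ × ℝ × ℝ) : ℝ × ℝ × ℝ :=
  (n * v.1 + φ v.2.2 * v.2.1 ^ n, v.2.1, 0)

/-- A perturbation of `normalField n φ`, in coordinates `(w, η, x)`. Its terms have higher order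
than the normal form if `w`, `η`, `x` are given the weights `n`, `1`, `0`. -/
def perturbation (n : ℕ) (r B C K : ℝ × ℝ × ℝ → ℝ) (v : ℝ × ℝ × ℝ) : ℝ × ℝ × ℝ :=
  (v.2.1 ^ (n + 1) * r v + v.2.1 * v.1 * B v + v.1 ^ 2 * C v, 0, v.2.1 * K v)

/-- The flow of `normalField (N + 1) φ` at time `3 log τ`. -/
noncomputable def scaling (N : ℕ) (φ : ℝ → ℝ) (y : ℝ × ℝ × ℝ × ℝ) : ℝ × ℝ × ℝ :=
  (y.1 ^ (3 * N + 3) * (y.2.1 + 3 * (φ y.2.2.2 * y.2.2.1 ^ (N + 1) * Real.log y.1)),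
    y.1 ^ 3 * y.2.2.1, y.2.2.2)

/-- The first coordinate of `scaling N φ (τ, w, η, x)` divided by `τ ^ (3 * N + 2)`, as a function
of `((τ, l), (w, η, x))` where `l` stands for `τ log τ`. -/
def scaledFst (N : ℕ) (φ : ℝ → ℝ) (y : (ℝ × ℝ) × ℝ × ℝ × ℝ) : ℝ :=
  y.1.1 * y.2.1 + 3 * φ y.2.2.2 * y.2.2.1 ^ (N + 1) * y.1.2

/-- The map `scaling` with the logarithm removed, see `scaledFst`. -/
def polyScaling (N : ℕ) (φ : ℝ → ℝ) (y : (ℝ × ℝ) × ℝ × ℝ × ℝ) : ℝ × ℝ × ℝ :=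
  (y.1.1 ^ (3 * N + 2) * scaledFst N φ y, y.1.1 ^ 3 * y.2.2.1, y.2.2.2)

/-- The pullback of `perturbation (N + 1) r B C K` under the flow `scaling N φ (τ, ·)`, multiplied
by `3 / τ`, at `((τ, l), (w, η, x))` with `l = τ log τ`. The time scale `3 log τ` of the flow is
chosen so that this depends smoothly on `τ` and `l` up to `τ = 0`. -/
noncomputable def scaledPerturbation (N : ℕ) (φ : ℝ → ℝ) (r B C K : ℝ × ℝ × ℝ → ℝ)
    (y : (ℝ × ℝ) × ℝ × ℝ × ℝ) : ℝ × ℝ × ℝ :=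
  let τ := y.1.1
  let l := y.1.2
  let η := y.2.2.1
  let m := scaledFst N φ y
  let z := polyScaling N φ y
  η • (3 * τ ^ 2 * η ^ (N + 1) * r z + 3 * τ * m * B z -
      9 * τ * l * η ^ (N + 1) * deriv φ y.2.2.2 * K z, 0, 3 * τ ^ 2 * K z) +
    m • (3 * τ ^ (3 * N) * m * C z, 0, 0)

/-- The parameters `(τ, τ log τ)` of `scaledPerturbation` as a continuous function of `τ`. -/
noncomputable def idMulLog : C(ℝ, ℝ × ℝ) :=
  ⟨fun τ => (τ, τ * Real.log τ), continuous_id.prodMk Real.continuous_mul_log⟩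

variable {N : ℕ} {φ : ℝ → ℝ} {r B C K : ℝ × ℝ × ℝ → ℝ}

theorem contDiff_scaledPerturbation (hφ : ContDiff ℝ ∞ φ) (hr : ContDiff ℝ ∞ r)
    (hB : ContDiff ℝ ∞ B) (hC : ContDiff ℝ ∞ C) (hK : ContDiff ℝ ∞ K) :
    ContDiff ℝ ∞ (scaledPerturbation N φ r B C K) := by
  have : ContDiff ℝ ∞ (deriv φ) := (contDiff_infty_iff_deriv.1 hφ).2
  unfold scaledPerturbation polyScaling scaledFst
  fun_prop

theorem scaledPerturbation_zero (a : ℝ × ℝ) : scaledPerturbation N φ r B C K (a, 0) = 0 := by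
  simp [scaledPerturbation, scaledFst]

theorem hasFDerivAt_smul_of_eq_zero {E F : Type*} [NormedAddCommGroup E] [NormedSpace ℝ E]
    [NormedAddCommGroup F] [NormedSpace ℝ F] {f : E → ℝ} {g : E → F} {a : E}
    (hf : DifferentiableAt ℝ f a) (hg : DifferentiableAt ℝ g a) (hfa : f a = 0) (hga : g a = 0) :
    HasFDerivAt (fun x => f x • g x) (0 : E →L[ℝ] F) a := by
  simpa [hfa, hga] using hf.hasFDerivAt.fun_smul hg.hasFDerivAt

theorem hasFDerivAt_scaledPerturbation_zero (hφ : ContDiff ℝ ∞ φ) (hr : ContDiff ℝ ∞ r)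
    (hB : ContDiff ℝ ∞ B) (hC : ContDiff ℝ ∞ C) (hK : ContDiff ℝ ∞ K) (hK0 : K 0 = 0)
    (a : ℝ × ℝ) :
    HasFDerivAt (fun v => scaledPerturbation N φ r B C K (a, v))
      (0 : ℝ × ℝ × ℝ →L[ℝ] ℝ × ℝ × ℝ) 0 := by
  have : Differentiable ℝ (deriv φ) :=
    (contDiff_infty_iff_deriv.1 hφ).2.differentiable (by simp)
  replace hφ := hφ.differentiable (by simp)
  replace hr := hr.differentiable (by simp)
  replace hB := hB.differentiable (by simp)
  replace hC := hC.differentiable (by simp)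
  replace hK := hK.differentiable (by simp)
  rw [← add_zero (0 : ℝ × ℝ × ℝ →L[ℝ] ℝ × ℝ × ℝ)]
  unfold scaledPerturbation polyScaling scaledFst
  refine (hasFDerivAt_smul_of_eq_zero ?_ ?_ ?_ ?_).fun_add
    (hasFDerivAt_smul_of_eq_zero ?_ ?_ ?_ ?_)
  any_goals fun_prop
  all_goals simp [← Prod.zero_eq_mk, hK0]

theorem fderiv_scaling_apply (hφ : Differentiable ℝ φ) (τ : ℝ) (v u : ℝ × ℝ × ℝ) :
    fderiv ℝ (fun v => scaling N φ (τ, v)) v u =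
      (τ ^ (3 * N + 3) * (u.1 + 3 * ((deriv φ v.2.2 * u.2.2 * v.2.1 ^ (N + 1) +
        φ v.2.2 * ((N + 1) * v.2.1 ^ N * u.2.1)) * Real.log τ)), τ ^ 3 * u.2.1, u.2.2) := by
  have hη : HasFDerivAt (fun v : ℝ × ℝ × ℝ => v.2.1) (.fst ℝ ℝ ℝ ∘L .snd ℝ ℝ (ℝ × ℝ)) v :=
    hasFDerivAt_fst.comp v hasFDerivAt_snd
  have hx : HasFDerivAt (fun v : ℝ × ℝ × ℝ => v.2.2) (.snd ℝ ℝ ℝ ∘L .snd ℝ ℝ (ℝ × ℝ)) v :=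
    hasFDerivAt_snd.comp v hasFDerivAt_snd
  have hφx := (hφ v.2.2).hasDerivAt.comp_hasFDerivAt v hx
  have hw := (hasFDerivAt_fst.fun_add (((hφx.fun_mul (hη.pow (N + 1))).mul_const
    (Real.log τ)).const_mul 3)).const_mul (τ ^ (3 * N + 3))
  rw [show fderiv ℝ (fun v => scaling N φ (τ, v)) v = _ from
    (hw.prodMk ((hη.const_mul (τ ^ 3)).prodMk hx)).fderiv]
  simp only [Function.comp_apply, add_tsub_cancel_right, nsmul_eq_mul, Nat.cast_add, Nat.cast_one,
    smul_add, ContinuousLinearMap.prod_apply, add_apply, smul_apply, ContinuousLinearMap.coe_fst',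
    smul_eq_mul, ContinuousLinearMap.comp_apply, ContinuousLinearMap.coe_snd', Prod.mk.injEq,
    and_true]
  ring

theorem scaledFst_scaling {τ s : ℝ} (hτ : τ ≠ 0) (hs : s ≠ 0) (v : ℝ × ℝ × ℝ) :
    scaledFst N φ (idMulLog s, scaling N φ (τ, v)) =
      τ ^ (3 * N + 2) * scaledFst N φ (idMulLog (τ * s), v) := by
  simp only [scaledFst, scaling, idMulLog, ContinuousMap.coe_mk, Real.log_mul hτ hs]
  ring

theorem polyScaling_scaling {τ s : ℝ} (hτ : τ ≠ 0) (hs : s ≠ 0) (v : ℝ × ℝ × ℝ) :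
    polyScaling N φ (idMulLog s, scaling N φ (τ, v)) =
      polyScaling N φ (idMulLog (τ * s), v) := by
  simp only [polyScaling, scaledFst_scaling hτ hs]
  simp only [scaling, idMulLog, ContinuousMap.coe_mk, ← mul_assoc, mul_pow, mul_comm]

theorem isScalingFlow_scaling (hφ : Differentiable ℝ φ)
    (hg : Continuous (scaledPerturbation N φ r B C K)) :
    IsScalingFlow (scaling N φ) (fun v => (3 : ℝ) • normalField (N + 1) φ v) idMulLog
      ⟨scaledPerturbation N φ r B C K, hg⟩ where
  differentiableAt {τ} hτ v := by
    have hlog : DifferentiableAt ℝ Real.log ((τ, v) : ℝ × ℝ × ℝ × ℝ).1 :=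
      Real.differentiableAt_log hτ.ne'
    unfold scaling
    fun_prop
  one_apply v := by simp [scaling]
  hasDerivAt_one v := by
    have hw := (hasDerivAt_pow (3 * N + 3) (1 : ℝ)).fun_mul
      ((((Real.hasDerivAt_log one_ne_zero).const_mul
        (φ v.2.2 * v.2.1 ^ (N + 1))).const_mul 3).const_add v.1)
    have hσ := hw.prodMk (((hasDerivAt_pow 3 (1 : ℝ)).mul_const v.2.1).prodMk
      (hasDerivAt_const _ v.2.2))
    refine hσ.congr_deriv ?_
    simp only [normalField, Nat.cast_add, Nat.cast_mul, Nat.cast_ofNat, Nat.cast_one,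
      Nat.add_one_sub_one, one_pow, mul_one, one_mul, Real.log_one, mul_zero, add_zero, inv_one,
      Prod.smul_mk, smul_eq_mul, Prod.mk.injEq, and_true]
    ring
  fderiv_smul {τ s} hτ _ hs _ v := by
    simp only [fderiv_scaling_apply hφ, ContinuousMap.coe_mk, scaledPerturbation,
      scaledFst_scaling hτ.ne' hs.ne', polyScaling_scaling hτ.ne' hs.ne']
    generalize polyScaling N φ (idMulLog (τ * s), v) = z
    generalize scaledFst N φ (idMulLog (τ * s), v) = m
    simp only [idMulLog, scaling, ContinuousMap.coe_mk, Real.log_mul hτ.ne' hs.ne', Prod.smul_mk,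
      Prod.mk_add_mk, smul_eq_mul]
    refine Prod.ext ?_ (Prod.ext ?_ ?_) <;> ring

theorem scaledPerturbation_idMulLog_one (v : ℝ × ℝ × ℝ) :
    scaledPerturbation N φ r B C K (idMulLog 1, v) = (3 : ℝ) • perturbation (N + 1) r B C K v := by
  simp only [scaledPerturbation, perturbation, polyScaling, scaledFst, idMulLog,
    ContinuousMap.coe_mk, Real.log_one, mul_zero, zero_mul, one_pow, mul_one, one_mul, add_zero,
    sub_zero, Prod.mk.eta, Prod.smul_mk, smul_eq_mul, Prod.mk_add_mk, Prod.mk.injEq, true_and]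
  constructor <;> ring

theorem orbEquiv_normalField_add_perturbation (hφ : ContDiff ℝ ∞ φ) (hr : ContDiff ℝ ∞ r)
    (hB : ContDiff ℝ ∞ B) (hC : ContDiff ℝ ∞ C) (hK : ContDiff ℝ ∞ K) (hK0 : K 0 = 0) :
    OrbEquiv Set.univ
      (fun v => normalField (N + 1) φ v + perturbation (N + 1) r B C K v)
      (normalField (N + 1) φ) 0 0 := by
  have hg := contDiff_scaledPerturbation (N := N) hφ hr hB hC hK
  obtain ⟨Ψ, O, hO, h0O, hΨ, hΨ0, hΨ', hconj⟩ :=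
    (isScalingFlow_scaling (hφ.differentiable (by simp)) hg.continuous).exists_conjugacy hg
      (fun s _ => scaledPerturbation_zero (idMulLog s))
      fun s _ => hasFDerivAt_scaledPerturbation_zero hφ hr hB hC hK hK0 (idMulLog s)
  simpa only [hΨ0] using orbEquiv_of_conjugacy (Ψ' := .refl ℝ _) hO h0O hΨ hΨ' fun c hc =>
    smul_right_injective _ (three_ne_zero (α := ℝ)) <| by
      simpa [map_smul, scaledPerturbation_idMulLog_one, smul_add] using hconj c hc

end NormalForm

section Straightening

/-- The vector field `(F, η, η K)` in coordinates `(w, η, x)`. -/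
def nodalField (F K : ℝ × ℝ × ℝ → ℝ) (v : ℝ × ℝ × ℝ) : ℝ × ℝ × ℝ :=
  (F v, v.2.1, v.2.1 * K v)

/-- On `Ω` the vector field `nodalField F K` is smooth, vanishes along the line `w = η = 0` and
has there the eigenvalue `ν` in the direction of `w`; at the origin its `x`-component vanishes to
second order. -/
structure IsNodalOn (ν : ℝ) (F K : ℝ × ℝ × ℝ → ℝ) (Ω : Set (ℝ × ℝ × ℝ)) : Prop where
  contDiffOn_fst : ContDiffOn ℝ ∞ F Ω
  contDiffOn_drift : ContDiffOn ℝ ∞ K Ω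
  fst_eq_zero (x : ℝ) (hx : (0, 0, x) ∈ Ω) : F (0, 0, x) = 0
  hasDerivAt_fst (x : ℝ) (hx : (0, 0, x) ∈ Ω) : HasDerivAt (fun w => F (w, 0, x)) ν 0
  drift_zero : K 0 = 0

namespace IsNodalOn

variable {n k : ℕ} {ν : ℝ} {F K : ℝ × ℝ × ℝ → ℝ} {r : ℝ × ℝ → ℝ} {b : ℝ → ℝ}

theorem contDiff_fst (h : IsNodalOn ν F K Set.univ) : ContDiff ℝ ∞ F :=
  contDiffOn_univ.1 h.contDiffOn_fst

theorem contDiff_drift (h : IsNodalOn ν F K Set.univ) : ContDiff ℝ ∞ K :=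
  contDiffOn_univ.1 h.contDiffOn_drift

theorem exists_contDiff_fst_eq_add_mul (h : IsNodalOn ν F K Set.univ) :
    ∃ Q : ℝ × ℝ × ℝ → ℝ, ContDiff ℝ ∞ Q ∧ (∀ w y, F (w, y) = F (0, y) + w * Q (w, y)) ∧
      ∀ x, Q (0, 0, x) = ν := by
  obtain ⟨Q, hQ, hFQ, hQ0⟩ := exists_contDiff_eq_add_smul h.contDiff_fst
  exact ⟨Q, hQ, hFQ, fun x => (hQ0 _).trans (h.hasDerivAt_fst x trivial).deriv⟩

theorem exists_orbEquiv_of_fst_eq_pow_self_mul (h : IsNodalOn (n + 1 : ℕ) F K Set.univ)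
    (hr : ContDiff ℝ ∞ r) (hF : ∀ η x, F (0, η, x) = η ^ (n + 1) * r (η, x)) :
    ∃ φ : ℝ → ℝ, ContDiff ℝ ∞ φ ∧
      OrbEquiv Set.univ (nodalField F K) (normalField (n + 1) φ) 0 0 := by
  obtain ⟨Q, hQ, hFQ, hQ0⟩ := h.exists_contDiff_fst_eq_add_mul
  obtain ⟨C, hC, hQC, -⟩ := exists_contDiff_eq_add_smul hQ
  obtain ⟨B, hB, hQB, -⟩ :=
    exists_contDiff_eq_add_smul (f := fun y : ℝ × ℝ => Q (0, y)) (by fun_prop)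
  obtain ⟨R, hR, hrR, -⟩ := exists_contDiff_eq_add_smul hr
  have hφ : ContDiff ℝ ∞ fun x => r (0, x) := by fun_prop
  have hfield : nodalField F K = fun v => normalField (n + 1) (fun x => r (0, x)) v +
      perturbation (n + 1) (fun v => R v.2) (fun v => B v.2) C K v := by
    funext ⟨w, η, x⟩
    have hFw : F (w, η, x) = η ^ (n + 1) * (r (0, x) + η * R (η, x)) +
        w * ((n + 1 : ℕ) + η * B (η, x) + w * C (w, η, x)) := by
      rw [hFQ, hF, hQC, hQB, hQ0, hrR]
      rfl
    simp only [nodalField, normalField, perturbation, hFw, Prod.mk_add_mk, add_zero, zero_add]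
    congr 1
    ring
  refine ⟨_, hφ, ?_⟩
  rw [hfield]
  exact orbEquiv_normalField_add_perturbation hφ (by fun_prop) (by fun_prop) hC h.contDiff_drift
    h.drift_zero

end IsNodalOn

/-- The shear `(w, η, x) ↦ (w + b x * η ^ k, η, x)`. -/
def shear (k : ℕ) (b : ℝ → ℝ) (v : ℝ × ℝ × ℝ) : ℝ × ℝ × ℝ :=
  (v.1 + b v.2.2 * v.2.1 ^ k, v.2)

/-- The first component of the image of `nodalField F K` under `shear k b`. -/
noncomputable def shearedFst (k : ℕ) (b : ℝ → ℝ) (F K : ℝ × ℝ × ℝ → ℝ) (v : ℝ × ℝ × ℝ) : ℝ :=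
  F (shear k (-b) v) +
    v.2.1 ^ k * (k * b v.2.2 + v.2.1 * deriv b v.2.2 * K (shear k (-b) v))

variable {n k : ℕ} {ν : ℝ} {F K : ℝ × ℝ × ℝ → ℝ} {r : ℝ × ℝ → ℝ} {b : ℝ → ℝ}

theorem contDiff_shear (hb : ContDiff ℝ ∞ b) : ContDiff ℝ ∞ (shear k b) := by
  unfold shear
  fun_prop

theorem leftInverse_shear_neg (k : ℕ) (b : ℝ → ℝ) :
    Function.LeftInverse (shear k (-b)) (shear k b) := fun v => by
  simp [shear]

theorem rightInverse_shear_neg (k : ℕ) (b : ℝ → ℝ) :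
    Function.RightInverse (shear k (-b)) (shear k b) := fun v => by
  simp [shear]

theorem shear_zero_mid (hk : k ≠ 0) (w x : ℝ) : shear k b (w, 0, x) = (w, 0, x) := by
  simp [shear, hk]

theorem fderiv_shear_nodalField (hb : ContDiff ℝ ∞ b) (v : ℝ × ℝ × ℝ) :
    fderiv ℝ (shear k b) v (nodalField F K v) =
      nodalField (shearedFst k b F K) (K ∘ shear k (-b)) (shear k b v) := by
  have hη : HasFDerivAt (fun v : ℝ × ℝ × ℝ => v.2.1) (.fst ℝ ℝ ℝ ∘L .snd ℝ ℝ (ℝ × ℝ)) v :=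
    hasFDerivAt_fst.comp v hasFDerivAt_snd
  have hx : HasFDerivAt (fun v : ℝ × ℝ × ℝ => v.2.2) (.snd ℝ ℝ ℝ ∘L .snd ℝ ℝ (ℝ × ℝ)) v :=
    hasFDerivAt_snd.comp v hasFDerivAt_snd
  have hbx := (hb.differentiable (by simp) v.2.2).hasDerivAt.comp_hasFDerivAt v hx
  have hshear := (hasFDerivAt_fst.fun_add (hbx.fun_mul (hη.pow k))).prodMk hasFDerivAt_snd
  rw [show fderiv ℝ (shear k b) v = _ from hshear.fderiv]
  have hpow : (k : ℝ) * v.2.1 ^ (k - 1) * v.2.1 = k * v.2.1 ^ k := by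
    cases k with
    | zero => simp
    | succ k => simp [pow_succ, mul_assoc]
  have hsheared : shearedFst k b F K (shear k b v) =
      F v + v.2.1 ^ k * (k * b v.2.2 + v.2.1 * deriv b v.2.2 * K v) := by
    rw [shearedFst, leftInverse_shear_neg k b v]
    rfl
  refine Prod.ext ?_ (Prod.ext ?_ ?_)
  · simp only [nodalField, hsheared, Function.comp_apply, nsmul_eq_mul, smul_eq_mul, add_apply,
      smul_apply, ContinuousLinearMap.prod_apply, ContinuousLinearMap.comp_apply,
      ContinuousLinearMap.coe_fst', ContinuousLinearMap.coe_snd']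
    linear_combination b v.2.2 * hpow
  · simp [nodalField, shear]
  · exact congrArg (v.2.1 * K ·) (leftInverse_shear_neg k b v).symm

theorem IsNodalOn.pushforward_shear (h : IsNodalOn ν F K Set.univ) (hb : ContDiff ℝ ∞ b)
    (hk : k ≠ 0) :
    IsNodalOn ν (shearedFst k b F K) (K ∘ shear k (-b)) Set.univ := by
  have hshear := contDiff_shear (k := k) hb.neg
  have hF := h.contDiff_fst
  have hK := h.contDiff_drift
  have : ContDiff ℝ ∞ (deriv b) := (contDiff_infty_iff_deriv.1 hb).2
  have hslice (w x : ℝ) : shearedFst k b F K (w, 0, x) = F (w, 0, x) := by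
    simp [shearedFst, shear_zero_mid hk, hk]
  refine ⟨ContDiff.contDiffOn ?_, (hK.comp hshear).contDiffOn, fun x hx => ?_, fun x hx => ?_,
    ?_⟩
  · unfold shearedFst
    fun_prop
  · rw [hslice, h.fst_eq_zero x hx]
  · simpa only [hslice] using h.hasDerivAt_fst x hx
  · exact (congrArg K (shear_zero_mid hk 0 0)).trans h.drift_zero

theorem IsNodalOn.exists_shearedFst_eq_pow_succ_mul (h : IsNodalOn ν F K Set.univ) (hk : k ≠ 0)
    (hν : ν ≠ k) (hr : ContDiff ℝ ∞ r) (hF : ∀ η x, F (0, η, x) = η ^ k * r (η, x)) :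
    ∃ (b : ℝ → ℝ) (r' : ℝ × ℝ → ℝ), ContDiff ℝ ∞ b ∧ ContDiff ℝ ∞ r' ∧
      ∀ η x, shearedFst k b F K (0, η, x) = η ^ (k + 1) * r' (η, x) := by
  obtain ⟨R, hR, hrR, -⟩ := exists_contDiff_eq_add_smul hr
  obtain ⟨Q, hQ, hFQ, hQ0⟩ := h.exists_contDiff_fst_eq_add_mul
  let b : ℝ → ℝ := fun x => r (0, x) / (ν - k)
  have hb : ContDiff ℝ ∞ b := by fun_prop
  have hrb (x : ℝ) : r (0, x) = (ν - k) * b x :=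
    (mul_div_cancel₀ _ (sub_ne_zero.2 hν)).symm
  let σ : ℝ × ℝ → ℝ × ℝ × ℝ := fun y => shear k (-b) (0, y)
  have hσ : ContDiff ℝ ∞ σ := (contDiff_shear hb.neg).comp (by fun_prop)
  have hσ0 (x : ℝ) : Q (σ (0, x)) = ν := by simp only [σ, shear_zero_mid hk, hQ0]
  obtain ⟨S, hS, hQS, -⟩ := exists_contDiff_eq_add_smul (hQ.comp hσ)
  have hK := h.contDiff_drift
  have : ContDiff ℝ ∞ (deriv b) := (contDiff_infty_iff_deriv.1 hb).2
  refine ⟨b, fun y => R y - b y.2 * S y + deriv b y.2 * K (σ y), hb, by fun_prop, fun η x => ?_⟩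
  have hQσ : Q (σ (η, x)) = ν + η * S (η, x) := by simpa [hσ0] using hQS η x
  have hFσ : F (σ (η, x)) = η ^ k * ((ν - k) * b x + η * R (η, x)) -
      b x * η ^ k * (ν + η * S (η, x)) := by
    have hrη : r (η, x) = (ν - k) * b x + η * R (η, x) := by rw [hrR, hrb, smul_eq_mul]
    have hσw : σ (η, x) = (-b x * η ^ k, η, x) := by simp [σ, shear]
    rw [← hQσ, ← hrη, hσw, hFQ, hF]
    ring
  change F (σ (η, x)) + η ^ k * (k * b x + η * deriv b x * K (σ (η, x))) = _
  rw [hFσ]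
  ring

theorem IsNodalOn.exists_orbEquiv_of_fst_eq_pow_mul (h : IsNodalOn n F K Set.univ) (hk : k ≠ 0)
    (hkn : k ≤ n) (hr : ContDiff ℝ ∞ r) (hF : ∀ η x, F (0, η, x) = η ^ k * r (η, x)) :
    ∃ φ : ℝ → ℝ, ContDiff ℝ ∞ φ ∧
      OrbEquiv Set.univ (nodalField F K) (normalField n φ) 0 0 := by
  induction hkn using Nat.decreasingInduction generalizing F K r with
  | self =>
    obtain ⟨m, rfl⟩ := Nat.exists_eq_add_one_of_ne_zero hk
    exact h.exists_orbEquiv_of_fst_eq_pow_self_mul hr hF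
  | of_succ k hkn ih =>
    obtain ⟨b, r', hb, hr', hF'⟩ :=
      h.exists_shearedFst_eq_pow_succ_mul hk (by exact_mod_cast hkn.ne') hr hF
    obtain ⟨φ, hφ, heq⟩ := ih (h.pushforward_shear hb hk) k.succ_ne_zero hr' hF'
    have h0 : shear k b 0 = 0 := shear_zero_mid hk 0 0
    exact ⟨φ, hφ, OrbEquiv.of_semiconj (by rwa [h0]) (contDiff_shear hb) (contDiff_shear hb.neg)
      (leftInverse_shear_neg k b) (rightInverse_shear_neg k b) (Set.subset_univ _)
      fun v _ => fderiv_shear_nodalField hb v⟩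

theorem IsNodalOn.exists_orbEquiv_normalField (h : IsNodalOn n F K Set.univ) (hn : 0 < n) :
    ∃ φ : ℝ → ℝ, ContDiff ℝ ∞ φ ∧
      OrbEquiv Set.univ (nodalField F K) (normalField n φ) 0 0 := by
  have hF := h.contDiff_fst
  obtain ⟨r, hr, hFr, -⟩ :=
    exists_contDiff_eq_add_smul (f := fun y : ℝ × ℝ => F (0, y)) (by fun_prop)
  refine h.exists_orbEquiv_of_fst_eq_pow_mul one_ne_zero hn hr fun η x => ?_
  rw [hFr, h.fst_eq_zero x trivial, zero_add, pow_one, smul_eq_mul]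

end Straightening

section Localization

theorem contDiff_mul_of_tsupport_subset {E : Type*} [NormedAddCommGroup E] [NormedSpace ℝ E]
    {Ω : Set E} {χ f : E → ℝ} (hΩ : IsOpen Ω) (hχ : ContDiff ℝ ∞ χ) (hχΩ : tsupport χ ⊆ Ω)
    (hf : ContDiffOn ℝ ∞ f Ω) : ContDiff ℝ ∞ fun x => χ x * f x :=
  contDiff_iff_contDiffAt.2 fun x => by
    by_cases hx : x ∈ tsupport χ
    · exact hχ.contDiffAt.mul (hf.contDiffAt (hΩ.mem_nhds (hχΩ hx)))
    · refine contDiffAt_const (c := (0 : ℝ)) |>.congr_of_eventuallyEq ?_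
      filter_upwards [notMem_tsupport_iff_eventuallyEq.1 hx] with y hy
      simp [hy]

theorem exists_contDiff_eventuallyEq_one_tsupport_subset {E : Type*} [NormedAddCommGroup E]
    [NormedSpace ℝ E] [HasContDiffBump E] {Ω : Set E} {z : E} (hΩ : Ω ∈ 𝓝 z) :
    ∃ χ : E → ℝ, ContDiff ℝ ∞ χ ∧ tsupport χ ⊆ Ω ∧ χ =ᶠ[𝓝 z] 1 := by
  obtain ⟨ρ, hρ, hball⟩ := Metric.nhds_basis_closedBall.mem_iff.1 hΩ
  let χ : ContDiffBump z := ⟨ρ / 2, ρ, half_pos hρ, half_lt_self hρ⟩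
  exact ⟨χ, χ.contDiff, χ.tsupport_eq.trans_subset hball, χ.eventuallyEq_one⟩

variable {n : ℕ} {ν : ℝ} {F K : ℝ × ℝ × ℝ → ℝ} {Ω : Set (ℝ × ℝ × ℝ)}

theorem IsNodalOn.exists_eventuallyEq (h : IsNodalOn ν F K Ω) (hΩ : IsOpen Ω) (h0 : 0 ∈ Ω) :
    ∃ F' K' : ℝ × ℝ × ℝ → ℝ, IsNodalOn ν F' K' Set.univ ∧ F' =ᶠ[𝓝 0] F ∧ K' =ᶠ[𝓝 0] K := by
  obtain ⟨χ, hχ, hχΩ, hχ1⟩ := exists_contDiff_eventuallyEq_one_tsupport_subset (hΩ.mem_nhds h0)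
  have hG : ContDiffOn ℝ ∞ (fun v => F v - ν * v.1) Ω := h.contDiffOn_fst.sub (by fun_prop)
  have hχG := contDiff_mul_of_tsupport_subset hΩ hχ hχΩ hG
  have hχK := contDiff_mul_of_tsupport_subset hΩ hχ hχΩ h.contDiffOn_drift
  have hχ0 (x : ℝ) (hx : (0, 0, x) ∉ Ω) : χ (0, 0, x) = 0 :=
    image_eq_zero_of_notMem_tsupport fun hx' => hx (hχΩ hx')
  refine ⟨fun v => ν * v.1 + χ v * (F v - ν * v.1), fun v => χ v * K v,
    ⟨ContDiff.contDiffOn (by fun_prop), hχK.contDiffOn, fun x _ => ?_, fun x _ => ?_,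
      by simp [h.drift_zero]⟩, ?_, ?_⟩
  · by_cases hx : (0, 0, x) ∈ Ω
    · simp [h.fst_eq_zero x hx]
    · simp [hχ0 x hx]
  · have hline : HasDerivAt (fun w : ℝ => ν * w) ν 0 := by
      simpa using (hasDerivAt_id (0 : ℝ)).const_mul ν
    suffices HasDerivAt (fun w => χ (w, 0, x) * (F (w, 0, x) - ν * w)) 0 0 by
      simpa using hline.fun_add this
    by_cases hx : (0, 0, x) ∈ tsupport χ
    · have hχx : DifferentiableAt ℝ (fun w => χ (w, 0, x)) 0 :=
        (hχ.differentiable (by simp) _).comp (0 : ℝ) (by fun_prop)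
      simpa [h.fst_eq_zero x (hχΩ hx)] using
        hχx.hasDerivAt.fun_mul ((h.hasDerivAt_fst x (hχΩ hx)).fun_sub hline)
    · have hχx : ∀ᶠ w : ℝ in 𝓝 0, χ (w, 0, x) = 0 :=
        (show Continuous fun w : ℝ => (w, (0 : ℝ), x) by fun_prop).continuousAt.eventually
          (notMem_tsupport_iff_eventuallyEq.1 hx)
      refine (hasDerivAt_const (0 : ℝ) (0 : ℝ)).congr_of_eventuallyEq ?_
      filter_upwards [hχx] with w hw
      rw [hw, zero_mul]
  · filter_upwards [hχ1] with v hv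
    simp [hv]
  · filter_upwards [hχ1] with v hv
    simp [hv]

theorem IsNodalOn.exists_orbEquiv_of_isOpen (h : IsNodalOn n F K Ω) (hn : 0 < n)
    (hΩ : IsOpen Ω) (h0 : 0 ∈ Ω) :
    ∃ φ : ℝ → ℝ, ContDiff ℝ ∞ φ ∧ OrbEquiv Ω (nodalField F K) (normalField n φ) 0 0 := by
  obtain ⟨F', K', h', hF, hK⟩ := h.exists_eventuallyEq hΩ h0
  obtain ⟨φ, hφ, heq⟩ := h'.exists_orbEquiv_normalField hn
  refine ⟨φ, hφ, heq.congr_of_eventuallyEq (hΩ.mem_nhds h0) ?_⟩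
  filter_upwards [hF, hK] with v hFv hKv
  rw [nodalField, nodalField, hFv, hKv]

theorem exists_orbEquiv_normalField {D : Set (ℝ × ℝ × ℝ)} (hD : IsOpen D)
    {f K : ℝ × ℝ × ℝ → ℝ} (hn : 0 < n) (hf : ContDiffOn ℝ ∞ f D) (hK : ContDiffOn ℝ ∞ K D)
    (hf0 : ∀ x, (0, x, 0) ∈ D → f (0, x, 0) = 0)
    (hf' : ∀ x, (0, x, 0) ∈ D → HasDerivAt (fun p => f (0, x, p)) n 0) {xs : ℝ}
    (hxs : (0, xs, 0) ∈ D) (hK0 : K (0, xs, 0) = 0) :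
    ∃ φ : ℝ → ℝ, ContDiff ℝ ∞ φ ∧
      OrbEquiv D (fun z => (z.1, K z * z.1, f z)) (normalField n φ) (0, xs, 0) 0 := by
  let Θ : ℝ × ℝ × ℝ → ℝ × ℝ × ℝ := fun z => (z.2.2, z.1, z.2.1 - xs)
  let Θ' : ℝ × ℝ × ℝ → ℝ × ℝ × ℝ := fun v => (v.2.1, v.2.2 + xs, v.1)
  have hΘ : ContDiff ℝ ∞ Θ := by fun_prop
  have hΘ' : ContDiff ℝ ∞ Θ' := by fun_prop
  have hleft : Function.LeftInverse Θ' Θ := fun z => by simp [Θ, Θ']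
  have hright : Function.RightInverse Θ' Θ := fun v => by simp [Θ, Θ']
  have hΘ0 : Θ (0, xs, 0) = 0 := by simp [Θ]
  have hΘ'0 : Θ' 0 = (0, xs, 0) := by simp [Θ']
  have hmaps : Set.MapsTo Θ' (Θ' ⁻¹' D) D := Set.mapsTo_preimage Θ' D
  have hnodal : IsNodalOn n (f ∘ Θ') (K ∘ Θ') (Θ' ⁻¹' D) :=
    ⟨hf.comp hΘ'.contDiffOn hmaps, hK.comp hΘ'.contDiffOn hmaps,
      fun x hx => hf0 (x + xs) hx, fun x hx => hf' (x + xs) hx, by simp [hΘ'0, hK0]⟩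
  obtain ⟨φ, hφ, heq⟩ := hnodal.exists_orbEquiv_of_isOpen hn (hD.preimage hΘ'.continuous)
    (by simpa [hΘ'0] using hxs)
  refine ⟨φ, hφ, OrbEquiv.of_semiconj (by rwa [hΘ0]) hΘ hΘ' hleft hright
    (fun z hz => by simpa [hleft z] using hz) fun z _ => ?_⟩
  have hΘz := (hasFDerivAt_snd (𝕜 := ℝ) (p := z.2)).comp z hasFDerivAt_snd |>.prodMk
    ((hasFDerivAt_fst (𝕜 := ℝ) (p := z)).prodMk <|
      ((hasFDerivAt_fst (𝕜 := ℝ) (p := z.2)).comp z hasFDerivAt_snd).sub_const xs)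
  rw [show fderiv ℝ Θ z = _ from hΘz.fderiv]
  simp [nodalField, hleft z, Θ, mul_comm]

end Localization

section Klein

/-- The polynomial `M` in `p` of the metric of Klein type, in coordinates `(t, x, p)`. -/
noncomputable def kleinCubic (n : ℕ) (α γ : ℝ × ℝ → ℝ) (z : ℝ × ℝ × ℝ) : ℝ :=
  let q := (z.1, z.2.1)
  α q * (q.1 * d1 α q - 2 * n * α q) * z.2.2 ^ 3 +
    q.1 * (d2 α q * γ q - 2 * α q * d2 γ q) * z.2.2 ^ 2 +
    (q.1 * (2 * d1 α q * γ q - α q * d1 γ q) - 2 * n * α q * γ q) * z.2.2 +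
    -(q.1 * γ q * d2 γ q)

/-- The last component `-M / (2 α γ)` of the vector field of the metric of Klein type. -/
noncomputable def kleinSlope (n : ℕ) (α γ : ℝ × ℝ → ℝ) (z : ℝ × ℝ × ℝ) : ℝ :=
  -kleinCubic n α γ z / (2 * α (z.1, z.2.1) * γ (z.1, z.2.1))

variable {n : ℕ} {α γ : ℝ × ℝ → ℝ} {D : Set (ℝ × ℝ)}

theorem contDiffOn_kleinSlope (hD : IsOpen D) (hα : ContDiffOn ℝ ∞ α D)
    (hγ : ContDiffOn ℝ ∞ γ D) (hα0 : ∀ q ∈ D, α q ≠ 0) (hγ0 : ∀ q ∈ D, γ q ≠ 0) :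
    ContDiffOn ℝ ∞ (kleinSlope n α γ) {z | (z.1, z.2.1) ∈ D} := by
  have hpartial {g : ℝ × ℝ → ℝ} (hg : ContDiffOn ℝ ∞ g D) (u : ℝ × ℝ) :
      ContDiffOn ℝ ∞ (fun q => fderiv ℝ g q u) D :=
    (hg.fderiv_of_isOpen hD (by simp)).clm_apply contDiffOn_const
  intro z hz
  have hDz : D ∈ 𝓝 (z.1, z.2.1) := hD.mem_nhds hz
  have hαz : ContDiffAt ℝ ∞ α (z.1, z.2.1) := hα.contDiffAt hDz
  have hγz : ContDiffAt ℝ ∞ γ (z.1, z.2.1) := hγ.contDiffAt hDz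
  have hαt : ContDiffAt ℝ ∞ (d1 α) (z.1, z.2.1) := (hpartial hα _).contDiffAt hDz
  have hαx : ContDiffAt ℝ ∞ (d2 α) (z.1, z.2.1) := (hpartial hα _).contDiffAt hDz
  have hγt : ContDiffAt ℝ ∞ (d1 γ) (z.1, z.2.1) := (hpartial hγ _).contDiffAt hDz
  have hγx : ContDiffAt ℝ ∞ (d2 γ) (z.1, z.2.1) := (hpartial hγ _).contDiffAt hDz
  refine (ContDiffAt.div ?_ (by fun_prop) ?_).contDiffWithinAt
  · unfold kleinCubic
    fun_prop
  · exact mul_ne_zero (mul_ne_zero two_ne_zero (hα0 _ hz)) (hγ0 _ hz)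

theorem kleinSlope_zero_fst {x : ℝ} (hα0 : α (0, x) ≠ 0) (hγ0 : γ (0, x) ≠ 0) (p : ℝ) :
    kleinSlope n α γ (0, x, p) = n * p + n * α (0, x) / γ (0, x) * p ^ 3 := by
  simp only [kleinSlope, kleinCubic]
  field_simp
  ring

theorem hasDerivAt_kleinSlope_zero {x : ℝ} (hα0 : α (0, x) ≠ 0) (hγ0 : γ (0, x) ≠ 0) :
    HasDerivAt (fun p => kleinSlope n α γ (0, x, p)) n 0 := by
  simp only [kleinSlope_zero_fst hα0 hγ0]
  simpa using ((hasDerivAt_id (0 : ℝ)).const_mul (n : ℝ)).fun_add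
    ((hasDerivAt_pow 3 (0 : ℝ)).const_mul (n * α (0, x) / γ (0, x)))

theorem stmt18_general (hn : 0 < n) (hD : IsOpen D) (hα : ContDiffOn ℝ ∞ α D)
    (hγ : ContDiffOn ℝ ∞ γ D) (hα0 : ∀ q ∈ D, α q ≠ 0) (hγ0 : ∀ q ∈ D, γ q ≠ 0) {xs : ℝ}
    (hxs : (0, xs) ∈ D) :
    ((0, 0 * 0, kleinSlope n α γ (0, xs, 0)) : ℝ × ℝ × ℝ) = 0 ∧
      ∃ φ : ℝ → ℝ, ContDiff ℝ ∞ φ ∧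
        OrbEquiv {z | (z.1, z.2.1) ∈ D} (fun z => (z.1, z.2.2 * z.1, kleinSlope n α γ z))
          (normalField n φ) (0, xs, 0) 0 :=
  have hzero (x : ℝ) (hx : (0, x) ∈ D) : kleinSlope n α γ (0, x, 0) = 0 := by
    simp [kleinSlope_zero_fst (hα0 _ hx) (hγ0 _ hx)]
  ⟨by simp [hzero xs hxs],
    exists_orbEquiv_normalField (K := fun z => z.2.2) (hD.preimage (by fun_prop)) hn
      (contDiffOn_kleinSlope hD hα hγ hα0 hγ0) (by fun_prop) hzero
      (fun x hx => hasDerivAt_kleinSlope_zero (hα0 _ hx) (hγ0 _ hx)) hxs rfl⟩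

end Klein

/-- Metric of Klein type `(α dx² + γ dt²)/t^{2n}`: at a singular point `(0, x*)` the germ
of `V = (t, pt, −M/(2αγ))` at `(0, x*, 0)` is `C^∞`-smoothly orbitally equivalent to
`ξ̇ = n·ξ + φ(ζ)·ηⁿ, η̇ = η, ζ̇ = 0` for some `C^∞` function `φ` of one real variable. -/
theorem stmt18 (D : Set (ℝ × ℝ)) (hD : IsOpen D) (n : ℕ) (hn : 0 < n)
    (α γ : ℝ × ℝ → ℝ)
    (hα : ContDiffOn ℝ (⊤ : ℕ∞) α D) (hγ : ContDiffOn ℝ (⊤ : ℕ∞) γ D)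
    (hαpos : ∀ q ∈ D, 0 < α q) (hγpos : ∀ q ∈ D, 0 < γ q)
    (μ₃ μ₂ μ₁ μ₀ : ℝ × ℝ → ℝ)
    (hμ₃ : μ₃ = fun q => α q * (q.1 * d1 α q - 2 * n * α q))
    (hμ₂ : μ₂ = fun q => q.1 * (d2 α q * γ q - 2 * α q * d2 γ q))
    (hμ₁ : μ₁ = fun q => q.1 * (2 * d1 α q * γ q - α q * d1 γ q) - 2 * n * α q * γ q)
    (hμ₀ : μ₀ = fun q => -(q.1 * γ q * d2 γ q))
    (M : ℝ × ℝ × ℝ → ℝ)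
    (hM : M = fun z => μ₃ (z.1, z.2.1) * z.2.2 ^ 3 + μ₂ (z.1, z.2.1) * z.2.2 ^ 2 +
      μ₁ (z.1, z.2.1) * z.2.2 + μ₀ (z.1, z.2.1))
    (V : ℝ × ℝ × ℝ → ℝ × ℝ × ℝ)
    (hV : V = fun z => (z.1, z.2.2 * z.1,
      -M z / (2 * α (z.1, z.2.1) * γ (z.1, z.2.1))))
    (xs : ℝ) (hq : ((0 : ℝ), xs) ∈ D) :
    V ((0 : ℝ), xs, (0 : ℝ)) = 0 ∧
    ∃ φ : ℝ → ℝ, ContDiff ℝ (⊤ : ℕ∞) φ ∧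
      OrbEquiv {z : ℝ × ℝ × ℝ | (z.1, z.2.1) ∈ D} V
        (fun y : ℝ × ℝ × ℝ => ((n : ℝ) * y.1 + φ y.2.2 * y.2.1 ^ n, y.2.1, (0 : ℝ)))
        ((0 : ℝ), xs, (0 : ℝ)) 0 := by
  subst hμ₃ hμ₂ hμ₁ hμ₀ hM hV
  exact stmt18_general hn hD hα hγ (fun q h => (hαpos q h).ne') (fun q h => (hγpos q h).ne') hq
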